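/- For any framework G(p) in ℝ², the bearing rigidity matrix and the distance rigidity matrix satisfy R(p) = diag(g_1^⊥/‖e_1‖², …, g_m^⊥/‖e_m‖²) · R_D(p) · (I_n ⊗ Q_{π/2}^T), where Q_{π/2} is the rotation of ℝ² by π/2 and g_k^⊥ := Q_{π/2} g_k; consequently rank(R(p)) = rank(R_D(p)). -/

import Mathlib

/-- `projL x` is the orthogonal projection matrix
`P_x = I - (x/‖x‖)(x/‖x‖)ᵀ`, i.e. `projL x y = y - ⟪x,y⟫/‖x‖² • x`. -/
noncomputable def projL {d : ℕ} (x : EuclideanSpace ℝ (Fin d)) :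
    EuclideanSpace ℝ (Fin d) →ₗ[ℝ] EuclideanSpace ℝ (Fin d) :=
  LinearMap.id - (‖x‖ ^ 2)⁻¹ •
    (LinearMap.toSpanSingleton ℝ (EuclideanSpace ℝ (Fin d)) x ∘ₗ (innerSL ℝ x).toLinearMap)

/-- The bearing rigidity matrix `R(p) = diag(P_{g_k}/‖e_k‖)(H ⊗ I_d)` of the framework
whose `k`-th oriented edge goes from vertex `(E k).1` to vertex `(E k).2`
(so `e_k = p_{(E k).2} - p_{(E k).1}` and `g_k = e_k/‖e_k‖`), viewed as a linear map
`ℝ^{dn} → ℝ^{dm}`. -/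
noncomputable def bearingMap {d n : ℕ} {ι : Type*} (E : ι → Fin n × Fin n)
    (p : Fin n → EuclideanSpace ℝ (Fin d)) :
    (Fin n → EuclideanSpace ℝ (Fin d)) →ₗ[ℝ] (ι → EuclideanSpace ℝ (Fin d)) :=
  LinearMap.pi fun k =>
    (‖p (E k).2 - p (E k).1‖⁻¹ • projL (p (E k).2 - p (E k).1)) ∘ₗ
      ((LinearMap.proj (R := ℝ) (φ := fun _ : Fin n => EuclideanSpace ℝ (Fin d)) (E k).2) -
       (LinearMap.proj (R := ℝ) (φ := fun _ : Fin n => EuclideanSpace ℝ (Fin d)) (E k).1))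

/-- The distance rigidity matrix `R_D(p) = diag(e_kᵀ)(H ⊗ I_d)`: its `k`-th row sends
`δ` to `⟪e_k, δ_{(E k).2} - δ_{(E k).1}⟫`. -/
noncomputable def distanceMap {d n : ℕ} {ι : Type*} (E : ι → Fin n × Fin n)
    (p : Fin n → EuclideanSpace ℝ (Fin d)) :
    (Fin n → EuclideanSpace ℝ (Fin d)) →ₗ[ℝ] (ι → ℝ) :=
  LinearMap.pi fun k =>
    (innerSL ℝ (p (E k).2 - p (E k).1)).toLinearMap ∘ₗ
      ((LinearMap.proj (R := ℝ) (φ := fun _ : Fin n => EuclideanSpace ℝ (Fin d)) (E k).2) -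
       (LinearMap.proj (R := ℝ) (φ := fun _ : Fin n => EuclideanSpace ℝ (Fin d)) (E k).1))

/-- `Q_{π/2}`: counterclockwise rotation of ℝ² by `π/2`, `(x₀, x₁) ↦ (-x₁, x₀)`. -/
noncomputable def rotL : EuclideanSpace ℝ (Fin 2) →ₗ[ℝ] EuclideanSpace ℝ (Fin 2) :=
  Matrix.toEuclideanLin (!![0, -1; 1, 0] : Matrix (Fin 2) (Fin 2) ℝ)

/-- `Q_{π/2}ᵀ`: clockwise rotation of ℝ² by `π/2`, `(x₀, x₁) ↦ (x₁, -x₀)`. -/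
noncomputable def rotLT : EuclideanSpace ℝ (Fin 2) →ₗ[ℝ] EuclideanSpace ℝ (Fin 2) :=
  Matrix.toEuclideanLin (!![0, 1; -1, 0] : Matrix (Fin 2) (Fin 2) ℝ)

/-!
In the plane a nonzero vector `e` and its rotation `Q e` form an orthogonal basis, so the projection
along `e` is the projection onto `Q e`: `P_e v = ‖e‖⁻² ⟪Q e, v⟫ Q e`. Moving `Q` across the inner
product turns the coefficient into `⟪e, Qᵀ v⟫`, which is a row of the distance rigidity matrix
evaluated at the rotated displacement. The factor `diag(g_k^⊥ / ‖e_k‖²)` has nonzero column blocks,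
hence is injective, and `I_n ⊗ Qᵀ` is surjective, so neither changes the rank.
-/

section LinearAlgebra

theorem finrank_range_comp_comp_of_injective_of_surjective {R M N P Q : Type*} [Ring R]
    [AddCommGroup M] [Module R M] [AddCommGroup N] [Module R N]
    [AddCommGroup P] [Module R P] [AddCommGroup Q] [Module R Q]
    {h : P →ₗ[R] Q} (hh : Function.Injective h) (f : N →ₗ[R] P)
    {g : M →ₗ[R] N} (hg : Function.Surjective g) :
    Module.finrank R (LinearMap.range (h ∘ₗ f ∘ₗ g)) = Module.finrank R (LinearMap.range f) := by
  rw [LinearMap.range_comp, LinearMap.range_comp_of_range_eq_top f (LinearMap.range_eq_top.mpr hg)]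
  exact (Submodule.equivMapOfInjective h hh _).finrank_eq.symm

variable {ι R M : Type*}

/-- The block diagonal matrix `diag(v_1, …, v_m)` whose `k`-th block is the column vector `v k`,
viewed as a linear map. -/
def diagMap [Semiring R] [AddCommMonoid M] [Module R M] (v : ι → M) : (ι → R) →ₗ[R] (ι → M) :=
  LinearMap.piMap fun k => LinearMap.toSpanSingleton R M (v k)

theorem diagMap_apply [Semiring R] [AddCommMonoid M] [Module R M] (v : ι → M) (c : ι → R) (k : ι) :
    diagMap v c k = c k • v k := rfl

theorem diagMap_injective [Ring R] [IsDomain R] [AddCommGroup M] [Module R M]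
    [Module.IsTorsionFree R M] {v : ι → M} (hv : ∀ k, v k ≠ 0) :
    Function.Injective (diagMap (R := R) v) :=
  Function.Injective.piMap fun k => smul_left_injective R (hv k)

end LinearAlgebra

section Plane

open scoped InnerProductSpace

theorem rotL_apply (x : EuclideanSpace ℝ (Fin 2)) : rotL x = !₂[-x 1, x 0] := by
  ext i
  fin_cases i <;> simp [rotL, Matrix.toLpLin_apply, dotProduct]

theorem rotLT_apply (x : EuclideanSpace ℝ (Fin 2)) : rotLT x = !₂[x 1, -x 0] := by
  ext i
  fin_cases i <;> simp [rotLT, Matrix.toLpLin_apply, dotProduct]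

theorem leftInverse_rotLT_rotL : Function.LeftInverse rotLT rotL := fun x => by
  rw [rotL_apply, rotLT_apply]
  ext i
  fin_cases i <;> simp

theorem rotLT_eq_adjoint_rotL : rotLT = rotL.adjoint := by
  rw [rotL, ← Matrix.toEuclideanLin_conjTranspose_eq_adjoint, rotLT]
  congr 1
  ext i j
  fin_cases i <;> fin_cases j <;> simp

theorem norm_sq_smul_eq_inner_smul_add_inner_rotL_smul (x y : EuclideanSpace ℝ (Fin 2)) :
    ‖x‖ ^ 2 • y = ⟪x, y⟫_ℝ • x + ⟪rotL x, y⟫_ℝ • rotL x := by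
  ext i
  fin_cases i <;>
    simp only [rotL_apply, EuclideanSpace.real_norm_sq_eq, PiLp.inner_apply, RCLike.inner_apply,
      Fin.sum_univ_two, PiLp.add_apply, PiLp.smul_apply, smul_eq_mul, Real.ringHom_apply,
      Matrix.cons_val_zero, Matrix.cons_val_one, Matrix.cons_val_fin_one, Fin.zero_eta,
      Fin.mk_one] <;>
    ring

theorem projL_apply {d : ℕ} (x y : EuclideanSpace ℝ (Fin d)) :
    projL x y = y - (‖x‖ ^ 2)⁻¹ • ⟪x, y⟫_ℝ • x := rfl

theorem projL_eq_inner_smul_rotL {e : EuclideanSpace ℝ (Fin 2)} (he : e ≠ 0)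
    (v : EuclideanSpace ℝ (Fin 2)) :
    projL e v = (‖e‖ ^ 2)⁻¹ • ⟪e, rotLT v⟫_ℝ • rotL e := by
  have norm_sq_ne_zero : ‖e‖ ^ 2 ≠ 0 := pow_ne_zero 2 (norm_ne_zero_iff.mpr he)
  calc
    projL e v = (‖e‖ ^ 2)⁻¹ • (‖e‖ ^ 2 • v - ⟪e, v⟫_ℝ • e) := by
      rw [projL_apply, smul_sub, inv_smul_smul₀ norm_sq_ne_zero]
    _ = (‖e‖ ^ 2)⁻¹ • ⟪rotL e, v⟫_ℝ • rotL e := by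
      rw [norm_sq_smul_eq_inner_smul_add_inner_rotL_smul, add_sub_cancel_left]
    _ = (‖e‖ ^ 2)⁻¹ • ⟪e, rotLT v⟫_ℝ • rotL e := by
      rw [rotLT_eq_adjoint_rotL, LinearMap.adjoint_inner_right]

/-- The vector `g^⊥ / ‖e‖²` for `g = e / ‖e‖`: the block of `diag(g_k^⊥ / ‖e_k‖²)` that belongs
to an edge with edge vector `e`. -/
noncomputable def scaledNormal (e : EuclideanSpace ℝ (Fin 2)) : EuclideanSpace ℝ (Fin 2) :=
  (‖e‖ ^ 2)⁻¹ • rotL (‖e‖⁻¹ • e)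

theorem scaledNormal_ne_zero {e : EuclideanSpace ℝ (Fin 2)} (he : e ≠ 0) : scaledNormal e ≠ 0 := by
  have norm_ne_zero : ‖e‖ ≠ 0 := norm_ne_zero_iff.mpr he
  have normal_ne_zero : rotL (‖e‖⁻¹ • e) ≠ 0 :=
    (map_ne_zero_iff rotL leftInverse_rotLT_rotL.injective).mpr
      (smul_ne_zero (inv_ne_zero norm_ne_zero) he)
  exact smul_ne_zero (inv_ne_zero (pow_ne_zero 2 norm_ne_zero)) normal_ne_zero

theorem inv_norm_smul_projL {e : EuclideanSpace ℝ (Fin 2)} (he : e ≠ 0)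
    (v : EuclideanSpace ℝ (Fin 2)) :
    ‖e‖⁻¹ • projL e v = ⟪e, rotLT v⟫_ℝ • scaledNormal e := by
  rw [projL_eq_inner_smul_rotL he, scaledNormal, map_smul]
  module

end Plane

section Framework

open scoped InnerProductSpace

variable {n : ℕ} {ι : Type*} (E : ι → Fin n × Fin n)

theorem bearingMap_apply {d : ℕ} (p δ : Fin n → EuclideanSpace ℝ (Fin d)) (k : ι) :
    bearingMap E p δ k =
      ‖p (E k).2 - p (E k).1‖⁻¹ • projL (p (E k).2 - p (E k).1) (δ (E k).2 - δ (E k).1) := rfl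

theorem distanceMap_apply {d : ℕ} (p δ : Fin n → EuclideanSpace ℝ (Fin d)) (k : ι) :
    distanceMap E p δ k = ⟪p (E k).2 - p (E k).1, δ (E k).2 - δ (E k).1⟫_ℝ := rfl

theorem bearingMap_eq_comp (p : Fin n → EuclideanSpace ℝ (Fin 2))
    (hp : ∀ k, p (E k).1 ≠ p (E k).2) :
    bearingMap E p = diagMap (fun k => scaledNormal (p (E k).2 - p (E k).1)) ∘ₗ
      distanceMap E p ∘ₗ rotLT.compLeft (Fin n) := by
  refine LinearMap.ext fun δ => funext fun k => ?_
  rw [LinearMap.comp_apply, LinearMap.comp_apply, diagMap_apply, distanceMap_apply,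
    bearingMap_apply, inv_norm_smul_projL (sub_ne_zero.mpr (hp k).symm), map_sub]
  rfl

theorem finrank_range_bearingMap (p : Fin n → EuclideanSpace ℝ (Fin 2))
    (hp : ∀ k, p (E k).1 ≠ p (E k).2) :
    Module.finrank ℝ (LinearMap.range (bearingMap E p)) =
      Module.finrank ℝ (LinearMap.range (distanceMap E p)) := by
  rw [bearingMap_eq_comp E p hp]
  exact finrank_range_comp_comp_of_injective_of_surjective
    (diagMap_injective fun k => scaledNormal_ne_zero (sub_ne_zero.mpr (hp k).symm)) _
    leftInverse_rotLT_rotL.surjective.comp_left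

end Framework

theorem bearing_eq_distance_rigidity_factorization_general {n : ℕ} {ι : Type*}
    (E : ι → Fin n × Fin n) (p : Fin n → EuclideanSpace ℝ (Fin 2))
    (hp : ∀ k, p (E k).1 ≠ p (E k).2) :
    (∀ δ : Fin n → EuclideanSpace ℝ (Fin 2), ∀ k : ι,
      bearingMap E p δ k =
        ((‖p (E k).2 - p (E k).1‖ ^ 2)⁻¹ * distanceMap E p (fun i => rotLT (δ i)) k) •
          rotL (‖p (E k).2 - p (E k).1‖⁻¹ • (p (E k).2 - p (E k).1))) ∧
    Module.finrank ℝ (LinearMap.range (bearingMap E p)) =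
      Module.finrank ℝ (LinearMap.range (distanceMap E p)) := by
  refine ⟨fun δ k => ?_, finrank_range_bearingMap E p hp⟩
  calc
    bearingMap E p δ k = distanceMap E p (fun i => rotLT (δ i)) k •
        scaledNormal (p (E k).2 - p (E k).1) := by
      rw [bearingMap_eq_comp E p hp]
      rfl
    _ = _ := by rw [scaledNormal, smul_smul, mul_comm]

/-- For a framework in ℝ²,
`R(p) = diag(g_k^⊥/‖e_k‖²) R_D(p) (I_n ⊗ Q_{π/2}ᵀ)` (rowwise identity below), and
consequently `rank R(p) = rank R_D(p)`. -/
theorem bearing_eq_distance_rigidity_factorization {n m : ℕ} (hn : 2 ≤ n)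
    (E : Fin m → Fin n × Fin n) (p : Fin n → EuclideanSpace ℝ (Fin 2))
    (hp : ∀ k, p (E k).1 ≠ p (E k).2) :
    (∀ δ : Fin n → EuclideanSpace ℝ (Fin 2), ∀ k : Fin m,
      bearingMap E p δ k =
        ((‖p (E k).2 - p (E k).1‖ ^ 2)⁻¹ * distanceMap E p (fun i => rotLT (δ i)) k) •
          rotL (‖p (E k).2 - p (E k).1‖⁻¹ • (p (E k).2 - p (E k).1))) ∧
    Module.finrank ℝ (LinearMap.range (bearingMap E p)) =
      Module.finrank ℝ (LinearMap.range (distanceMap E p)) :=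
  bearing_eq_distance_rigidity_factorization_general E p hp
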